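/- Let f : ℝ^d → ℝ be differentiable and let L > 0. Then f is both convex and L-smooth if and only if f(y) ≥ f(x) + ⟨∇f(x), y − x⟩ + (1/(2L)) ‖∇f(x) − ∇f(y)‖² for all x, y ∈ ℝ^d. -/

import Mathlib

/-!
Convexity of a differentiable function is the tangent inequality
`f x + ⟪∇f x, y - x⟫ ≤ f y` (`ConvexOn.add_inner_gradient_le`, `convexOn_of_add_inner_le`).

Forward direction: the tangent plane at `x` lies below `f`, and the quadratic model at `y` lies
above `f`. Comparing the two at the minimizer over `z` of (model at `y`) - (tangent plane at `x`),
namely `z = y - L⁻¹ • (∇f y - ∇f x)`, gives exactly the gradient term `‖∇f x - ∇f y‖² / (2L)`.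

Backward direction: dropping the gradient term leaves the tangent inequality, hence convexity.
Exchanging `x` and `y` bounds `f y` above by
`f x + ⟪∇f y, y - x⟫ - ‖∇f x - ∇f y‖² / (2L)`, and smoothness follows from Young's inequality
`⟪Δ, v⟫ ≤ ‖Δ‖² / (2L) + L / 2 * ‖v‖²` with `Δ = ∇f y - ∇f x`, `v = y - x`.
-/

open scoped RealInnerProductSpace

section Aux

variable {E : Type*} [NormedAddCommGroup E] [InnerProductSpace ℝ E]

/-- A differentiable convex function lies above its tangent planes: restrict it to the line through
`x` and `y` and compare the derivative at `0` with the slope of the secant over `[0, 1]`. -/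
theorem ConvexOn.add_inner_gradient_le [CompleteSpace E] {f : E → ℝ}
    (hc : ConvexOn ℝ Set.univ f) (hf : Differentiable ℝ f) (x y : E) :
    f x + ⟪gradient f x, y - x⟫ ≤ f y := by
  have hline : ConvexOn ℝ Set.univ (f ∘ AffineMap.lineMap (k := ℝ) x y) := by
    simpa using hc.comp_affineMap (AffineMap.lineMap (k := ℝ) x y)
  have hd : HasDerivAt (f ∘ AffineMap.lineMap (k := ℝ) x y) (fderiv ℝ f x (y - x)) 0 := by
    refine HasFDerivAt.comp_hasDerivAt (0 : ℝ) ?_ AffineMap.hasDerivAt_lineMap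
    simpa using (hf x).hasFDerivAt
  have h := hline.le_slope_of_hasDerivAt (Set.mem_univ 0) (Set.mem_univ 1) one_pos hd
  simp only [slope_def_field, Function.comp_apply, AffineMap.lineMap_apply_zero,
    AffineMap.lineMap_apply_one, sub_zero, div_one] at h
  rw [inner_gradient_left]
  linarith

/-- A function with a supporting affine function of slope `g x` at every point `x` is convex. -/
theorem convexOn_of_add_inner_le {f : E → ℝ} {g : E → E}
    (h : ∀ x y, f x + ⟪g x, y - x⟫ ≤ f y) : ConvexOn ℝ Set.univ f := by
  refine ⟨convex_univ, fun x _ y _ a b ha hb hab => ?_⟩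
  set z := a • x + b • y with hz
  have hx := mul_le_mul_of_nonneg_left (h z x) ha
  have hy := mul_le_mul_of_nonneg_left (h z y) hb
  -- The linear terms cancel, since `z` is the barycenter of `x` and `y`.
  have h0 : a * ⟪g z, x - z⟫ + b * ⟪g z, y - z⟫ = 0 := by
    rw [← real_inner_smul_right, ← real_inner_smul_right, ← inner_add_right]
    have : a • (x - z) + b • (y - z) = 0 := by
      rw [smul_sub, smul_sub, sub_add_sub_comm, ← hz, ← add_smul, hab, one_smul, sub_self]
    rw [this, inner_zero_right]
  have h1 : a * f z + b * f z = f z := by rw [← add_mul, hab, one_mul]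
  simp only [smul_eq_mul]
  linarith

end Aux

theorem convex_and_smooth_iff_lower_gradient_bound {d : ℕ}
    (f : EuclideanSpace ℝ (Fin d) → ℝ)
    (hf : Differentiable ℝ f) {L : ℝ} (hL : 0 < L) :
    (ConvexOn ℝ Set.univ f ∧
      ∀ x y, f y ≤ f x + ⟪gradient f x, y - x⟫ + L / 2 * ‖y - x‖ ^ 2) ↔
    (∀ x y : EuclideanSpace ℝ (Fin d),
      f y ≥ f x + ⟪gradient f x, y - x⟫
        + 1 / (2 * L) * ‖gradient f x - gradient f y‖ ^ 2) := by
  constructor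
  · rintro ⟨hc, hs⟩ x y
    set Δ := gradient f x - gradient f y with hΔ
    have h1 := hc.add_inner_gradient_le hf x (y + L⁻¹ • Δ)
    have h2 := hs y (y + L⁻¹ • Δ)
    rw [add_sub_cancel_left, norm_smul, mul_pow, Real.norm_eq_abs, sq_abs,
      real_inner_smul_right] at h2
    rw [add_sub_right_comm, inner_add_right, real_inner_smul_right] at h1
    have h3 : ⟪gradient f x, Δ⟫ - ⟪gradient f y, Δ⟫ = ‖Δ‖ ^ 2 := by
      rw [← inner_sub_left, ← hΔ, real_inner_self_eq_norm_sq]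
    have h4 : L⁻¹ * ⟪gradient f x, Δ⟫ - L⁻¹ * ⟪gradient f y, Δ⟫ = L⁻¹ * ‖Δ‖ ^ 2 := by
      rw [← mul_sub, h3]
    have h5 : L⁻¹ * ‖Δ‖ ^ 2 - L / 2 * (L⁻¹ ^ 2 * ‖Δ‖ ^ 2) = 1 / (2 * L) * ‖Δ‖ ^ 2 := by
      field_simp
      ring
    linarith
  · intro h
    refine ⟨convexOn_of_add_inner_le (g := gradient f) fun x y => ?_, fun x y => ?_⟩
    · have : 0 ≤ 1 / (2 * L) * ‖gradient f x - gradient f y‖ ^ 2 := by positivity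
      linarith [h x y]
    · have h1 := h y x
      rw [← neg_sub y x, inner_neg_right] at h1
      set Δ := gradient f y - gradient f x with hΔ
      have h2 : ⟪Δ, y - x⟫ = ⟪gradient f y, y - x⟫ - ⟪gradient f x, y - x⟫ := inner_sub_left _ _ _
      -- Young's inequality, from `0 ≤ ‖Δ - L • (y - x)‖² / (2L)`.
      have h3 : ⟪Δ, y - x⟫ ≤ 1 / (2 * L) * ‖Δ‖ ^ 2 + L / 2 * ‖y - x‖ ^ 2 := by
        have h4 : 0 ≤ 1 / (2 * L) * ‖Δ - L • (y - x)‖ ^ 2 := by positivity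
        rw [norm_sub_sq_real, real_inner_smul_right, norm_smul, mul_pow, Real.norm_eq_abs,
          sq_abs] at h4
        have h5 : 1 / (2 * L) * (‖Δ‖ ^ 2 - 2 * (L * ⟪Δ, y - x⟫) + L ^ 2 * ‖y - x‖ ^ 2)
            = 1 / (2 * L) * ‖Δ‖ ^ 2 + L / 2 * ‖y - x‖ ^ 2 - ⟪Δ, y - x⟫ := by
          field_simp
          ring
        linarith
      linarith
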